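/- For every real r with 0 ≤ r ≤ 6√2 − 8, setting u = 9r/((1−r)(8+r)) and w = r(8+r)³/(8+20r−r²)², the following identity holds: ∑_{n=1}^∞ (1/n)·(u/(9(1+u)²))ⁿ·C(2n,n)·∑_{k=0}^n C(2k,k)·C(n,k)² = (2/5)·log(27(1+u)⁵/((3+u)³(1+3u))) + (4u³/(5(3+u)⁴))·₅F₄(5/4,3/2,7/4,1,1; 2,2,2,2; 256u³/(9(3+u)⁴)) + (1/10)·∫₀^w [(₂F₁(1/4,3/4;1;t))² − 1]·(1−2t)/(t(1−t)) dt. -/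

import Mathlib

/-!
The identity is proved by differentiating both sides, after expressing all three transcendental
functions through `H = ₃F₂(1/4,1/2,3/4;1,1;·)`. Write `θ = u d/du`, let `A(z) = ∑ sc n zⁿ` with
`sc n = C(2n,n) ∑ₖ C(2k,k) C(n,k)²`, and put `F = ₂F₁(1/4,3/4;1;·)`, `Z = u / (9(1+u)²)`,
`X1 = 256u³ / (9(3+u)⁴)`, `X2 = 256u / (9(1+3u)⁴)`. The key fact is

  `A(Z) / (1+u) = H(X1) / (1+u/3) = F(w)² / (1+3u)`.

The functions `A(Z)/(1+u)`, `H(X1)/(1+u/3)` and `H(X2)/(1+3u)` solve one and the same third-order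
equation, that of the Almkvist–Zudilin numbers, which has a regular singular point at `u = 0` with
the triple exponent `0`. So an analytic solution near `0` is determined by its value there
(`theta_unique₂`), and the three functions agree near `0` (`Z_eq_X1`, `X2_eq_X1`). The equation
for `A` comes from a recurrence for `sc`, obtained by creative telescoping (`hex_telescope`). The same
uniqueness principle gives Clausen's formula `F(t)² = H(4t(1-t))` near `0` (`clausen`), and
`4w(1-w) = X2` identically in `r`. Analytic continuation, in `u` for the first equality and in `r` for
the second, extends the key fact to the whole range (`green_eq`, `F_eq`); for the second equality
this is essential, since Clausen's formula fails for `t > 1/2`.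

The left-hand side and the `₅F₄` term are antiderivatives of `(A(z) - 1)/z` and of `(H(x) - 1)/x`. By
the key fact, the derivatives of the two sides with respect to `r` are linear in `H(X1)` with
rational coefficients, and agree (`diff_hasTheta`). Both sides vanish at `r = 0`, which proves the
identity for `r < 6√2 - 8`. At `r = 6√2 - 8`, where `u = 1` and `Z = 1/36` is on the circle of
convergence of `A`, it follows by monotone convergence (`identity_le`).
-/

open Real Finset

/-- Pochhammer symbol `(a)ₙ = a(a+1)⋯(a+n−1) = Γ(a+n)/Γ(a)`. -/
noncomputable def poch (a : ℝ) (n : ℕ) : ℝ := ∏ i ∈ Finset.range n, (a + i)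

/-- The generalized hypergeometric function `₅F₄(5/4,3/2,7/4,1,1; 2,2,2,2; z)`. -/
noncomputable def F54 (z : ℝ) : ℝ :=
  ∑' n : ℕ, (poch (5/4) n * poch (3/2) n * poch (7/4) n * poch 1 n * poch 1 n) /
      (poch 2 n * poch 2 n * poch 2 n * poch 2 n) * z ^ n / (n.factorial : ℝ)

/-- The Gauss hypergeometric function `₂F₁(1/4,3/4; 1; t)`. -/
noncomputable def F21 (t : ℝ) : ℝ :=
  ∑' n : ℕ, (poch (1/4) n * poch (3/4) n) / poch 1 n * t ^ n / (n.factorial : ℝ)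

open Filter Topology

/-! ### The Euler operator -/

/-- `HasTheta f f' x`: the Euler operator `θ = x d/dx` applied to `f` at `x` gives the value `f'`. -/
def HasTheta (f : ℝ → ℝ) (f' x : ℝ) : Prop := ∃ d, HasDerivAt f d x ∧ x * d = f'

namespace HasTheta

lemma mul {f g : ℝ → ℝ} {f' g' x : ℝ} (hf : HasTheta f f' x) (hg : HasTheta g g' x) :
    HasTheta (fun y => f y * g y) (f' * g x + f x * g') x := by
  obtain ⟨d, hd, rfl⟩ := hf
  obtain ⟨e, he, rfl⟩ := hg
  exact ⟨_, hd.mul he, by ring⟩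

lemma add {f g : ℝ → ℝ} {f' g' x : ℝ} (hf : HasTheta f f' x) (hg : HasTheta g g' x) :
    HasTheta (fun y => f y + g y) (f' + g') x := by
  obtain ⟨d, hd, rfl⟩ := hf
  obtain ⟨e, he, rfl⟩ := hg
  exact ⟨_, hd.add he, by ring⟩

lemma sub {f g : ℝ → ℝ} {f' g' x : ℝ} (hf : HasTheta f f' x) (hg : HasTheta g g' x) :
    HasTheta (fun y => f y - g y) (f' - g') x := by
  obtain ⟨d, hd, rfl⟩ := hf
  obtain ⟨e, he, rfl⟩ := hg
  exact ⟨_, hd.sub he, by ring⟩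

lemma const (c x : ℝ) : HasTheta (fun _ => c) 0 x := ⟨0, hasDerivAt_const _ _, by ring⟩

lemma congr_val {f : ℝ → ℝ} {a b x : ℝ} (h : HasTheta f a x) (hab : a = b) : HasTheta f b x :=
  hab ▸ h

/-- Chain rule for `θ`: if `θφ = s φ`, then `θ(f ∘ φ) = s · (θf) ∘ φ`, also where `φ` vanishes. -/
lemma comp {f φ : ℝ → ℝ} {f' s x : ℝ} (hf : HasTheta f f' (φ x)) (hφ : HasTheta φ (s * φ x) x) :
    HasTheta (fun y => f (φ y)) (s * f') x := by
  obtain ⟨d, hd, rfl⟩ := hf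
  obtain ⟨e, he, h⟩ := hφ
  refine ⟨_, hd.comp x he, ?_⟩
  linear_combination d * h

end HasTheta

/-- If `f = xᵐ g` near `0` and `f₁ = θf` near `0`, then `f₁ = xᵐ g₁` with `g₁ = m g + x g'`. -/
lemma theta_factor {f f1 g : ℝ → ℝ} {m : ℕ} (hg : AnalyticAt ℝ g 0)
    (hfg : ∀ᶠ x in 𝓝 0, f x = x ^ m * g x) (hf : ∀ᶠ x in 𝓝 0, HasTheta f (f1 x) x) :
    ∃ g1 : ℝ → ℝ, AnalyticAt ℝ g1 0 ∧ g1 0 = m * g 0 ∧ ∀ᶠ x in 𝓝 0, f1 x = x ^ m * g1 x := by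
  refine ⟨fun x => m * g x + x * deriv g x, ?_, by simp, ?_⟩
  · exact (analyticAt_const.mul hg).add (analyticAt_id.mul hg.deriv)
  · filter_upwards [hfg.eventually_nhds, hf, hg.eventually_analyticAt] with x h1 h2 h3
    obtain ⟨d, hd, hx⟩ := h2
    have h4 : HasDerivAt (fun x => x ^ m * g x) ((m * x ^ (m - 1)) * g x + x ^ m * deriv g x) x :=
      (hasDerivAt_pow m x).mul h3.differentiableAt.hasDerivAt
    have h5 := hd.unique (h4.congr_of_eventuallyEq h1)
    rw [← hx, h5]
    rcases m with _ | m
    · simp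
    · simp only [Nat.add_sub_cancel]
      push_cast
      ring

/-- Uniqueness for a third-order equation `θ³f = x (c₀ f + c₁ θf + c₂ θ²f)`, which has a regular
singular point at `0` with all exponents equal to `0`: an analytic solution vanishing at `0`
is zero, because a leading term `g₀ xᵐ` with `m ≥ 1` would force `m³ g₀ = 0`. -/
lemma theta_unique {f f1 f2 f3 c0 c1 c2 : ℝ → ℝ} (hf : AnalyticAt ℝ f 0) (h0 : f 0 = 0)
    (hf1 : ∀ᶠ x in 𝓝 0, HasTheta f (f1 x) x) (hf2 : ∀ᶠ x in 𝓝 0, HasTheta f1 (f2 x) x)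
    (hf3 : ∀ᶠ x in 𝓝 0, HasTheta f2 (f3 x) x)
    (hc0 : ContinuousAt c0 0) (hc1 : ContinuousAt c1 0) (hc2 : ContinuousAt c2 0)
    (hode : ∀ᶠ x in 𝓝 0, f3 x = x * (c0 x * f x + c1 x * f1 x + c2 x * f2 x)) :
    ∀ᶠ x in 𝓝 0, f x = 0 := by
  by_contra hcon
  obtain ⟨m, g, hg, hg0, hfg⟩ := hf.exists_eventuallyEq_pow_smul_nonzero_iff.mpr hcon
  simp only [sub_zero, smul_eq_mul] at hfg
  have hm : m ≠ 0 := by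
    rintro rfl
    have := hfg.self_of_nhds
    simp [h0] at this
    exact hg0 this.symm
  obtain ⟨g1, hg1, hg10, hfg1⟩ := theta_factor hg hfg hf1
  obtain ⟨g2, hg2, hg20, hfg2⟩ := theta_factor hg1 hfg1 hf2
  obtain ⟨g3, hg3, hg30, hfg3⟩ := theta_factor hg2 hfg2 hf3
  have key : ∀ᶠ x in 𝓝[≠] (0:ℝ), g3 x = x * (c0 x * g x + c1 x * g1 x + c2 x * g2 x) := by
    filter_upwards [hfg.filter_mono nhdsWithin_le_nhds, hfg1.filter_mono nhdsWithin_le_nhds,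
      hfg2.filter_mono nhdsWithin_le_nhds, hfg3.filter_mono nhdsWithin_le_nhds,
      hode.filter_mono nhdsWithin_le_nhds, self_mem_nhdsWithin] with x h h1 h2 h3 ho hx
    have hx : x ≠ 0 := hx
    rw [h, h1, h2, h3] at ho
    have : x ^ m ≠ 0 := pow_ne_zero _ hx
    apply mul_left_cancel₀ this
    linear_combination ho
  have hcont : ContinuousAt (fun x => x * (c0 x * g x + c1 x * g1 x + c2 x * g2 x)) 0 :=
    continuousAt_id.mul (((hc0.mul hg.continuousAt).add (hc1.mul hg1.continuousAt)).add
      (hc2.mul hg2.continuousAt))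
  have l1 : Tendsto g3 (𝓝[≠] 0) (𝓝 (g3 0)) := hg3.continuousAt.tendsto.mono_left nhdsWithin_le_nhds
  have l2 := (hcont.tendsto.mono_left (nhdsWithin_le_nhds (s := {0}ᶜ))).congr'
    (key.mono fun _ h => h.symm)
  have := tendsto_nhds_unique l1 l2
  rw [hg30, hg20, hg10] at this
  simp [hm, hg0] at this

/-- Two analytic solutions of `θ³f = x (c₀ f + c₁ θf + c₂ θ²f)` with the same value at `0`
agree near `0`. -/
lemma theta_unique₂ {f f1 f2 f3 g g1 g2 g3 c0 c1 c2 : ℝ → ℝ}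
    (hf : AnalyticAt ℝ f 0) (hg : AnalyticAt ℝ g 0) (h0 : f 0 = g 0)
    (hf1 : ∀ᶠ x in 𝓝 0, HasTheta f (f1 x) x) (hf2 : ∀ᶠ x in 𝓝 0, HasTheta f1 (f2 x) x)
    (hf3 : ∀ᶠ x in 𝓝 0, HasTheta f2 (f3 x) x)
    (hg1 : ∀ᶠ x in 𝓝 0, HasTheta g (g1 x) x) (hg2 : ∀ᶠ x in 𝓝 0, HasTheta g1 (g2 x) x)
    (hg3 : ∀ᶠ x in 𝓝 0, HasTheta g2 (g3 x) x)
    (hc0 : ContinuousAt c0 0) (hc1 : ContinuousAt c1 0) (hc2 : ContinuousAt c2 0)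
    (hodef : ∀ᶠ x in 𝓝 0, f3 x = x * (c0 x * f x + c1 x * f1 x + c2 x * f2 x))
    (hodeg : ∀ᶠ x in 𝓝 0, g3 x = x * (c0 x * g x + c1 x * g1 x + c2 x * g2 x)) :
    f =ᶠ[𝓝 0] g := by
  have := theta_unique (f := fun x => f x - g x) (f1 := fun x => f1 x - g1 x)
    (f2 := fun x => f2 x - g2 x) (f3 := fun x => f3 x - g3 x) (hf.sub hg) (by simp [h0])
    (by filter_upwards [hf1, hg1] with x a b using a.sub b)
    (by filter_upwards [hf2, hg2] with x a b using a.sub b)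
    (by filter_upwards [hf3, hg3] with x a b using a.sub b) hc0 hc1 hc2
    (by filter_upwards [hodef, hodeg] with x a b; rw [a, b]; ring)
  filter_upwards [this] with x hx using sub_eq_zero.mp hx

/-! ### Power series -/

/-- The sum of the power series with coefficients `a`. -/
noncomputable def PS (a : ℕ → ℝ) (x : ℝ) : ℝ := ∑' n, a n * x ^ n

/-- The power series with coefficients `a` converges on `(-ρ, ρ)`. -/
def ConvOn (a : ℕ → ℝ) (ρ : ℝ) : Prop := ∀ x, |x| < ρ → Summable fun n => a n * x ^ n

/-- The coefficients of `θ f`, where `f` has coefficients `a`. -/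
def thetaCoeff (a : ℕ → ℝ) : ℕ → ℝ := fun n => n * a n

lemma convOn_of_bound {a : ℕ → ℝ} {R : ℝ} (hR : 0 < R) (h : ∀ n, |a n| ≤ R ^ n) :
    ConvOn a (1 / R) := by
  intro x hx
  have hlt : R * |x| < 1 := by rwa [lt_div_iff₀ hR, mul_comm] at hx
  refine Summable.of_norm_bounded (summable_geometric_of_lt_one (by positivity) hlt) fun n => ?_
  rw [norm_mul, norm_pow, mul_pow]
  exact mul_le_mul_of_nonneg_right (h n) (by positivity)

lemma ConvOn.bounded {a : ℕ → ℝ} {ρ y : ℝ} (h : ConvOn a ρ) (hy0 : 0 ≤ y) (hy : y < ρ) :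
    ∃ C, ∀ n, |a n| * y ^ n ≤ C := by
  have hs := (h y (by rwa [abs_of_nonneg hy0])).tendsto_atTop_zero
  obtain ⟨C, hC⟩ := hs.norm.bddAbove_range
  refine ⟨C, fun n => ?_⟩
  have := hC ⟨n, rfl⟩
  simpa [abs_mul, abs_of_nonneg hy0] using this

lemma ConvOn.theta {a : ℕ → ℝ} {ρ : ℝ} (h : ConvOn a ρ) : ConvOn (thetaCoeff a) ρ := by
  intro x hx
  obtain ⟨y, hxy, hy⟩ := exists_between hx
  have hy0 : 0 < y := lt_of_le_of_lt (abs_nonneg x) hxy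
  obtain ⟨C, hC⟩ := h.bounded hy0.le hy
  have hlt : ‖|x| / y‖ < 1 := by
    rw [norm_div, norm_of_nonneg hy0.le, Real.norm_eq_abs, abs_abs]
    exact (div_lt_one hy0).mpr hxy
  refine Summable.of_norm_bounded
    ((summable_pow_mul_geometric_of_norm_lt_one 1 hlt).mul_left C) fun n => ?_
  have e : ‖thetaCoeff a n * x ^ n‖ = (|a n| * y ^ n) * ((n:ℝ) ^ 1 * (|x| / y) ^ n) := by
    simp only [thetaCoeff, norm_mul, norm_pow, Real.norm_eq_abs, Nat.abs_cast, div_pow]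
    field_simp
  rw [e]
  exact mul_le_mul_of_nonneg_right (hC n) (by positivity)

lemma ConvOn.analyticAt {a : ℕ → ℝ} {ρ x : ℝ} (h : ConvOn a ρ) (hx : |x| < ρ) :
    AnalyticAt ℝ (PS a) x := by
  obtain ⟨y, hxy, hy⟩ := exists_between hx
  have hy0 : 0 < y := lt_of_le_of_lt (abs_nonneg x) hxy
  obtain ⟨C, hC⟩ := h.bounded hy0.le hy
  have hrad : ((y.toNNReal : NNReal) : ENNReal) ≤ (FormalMultilinearSeries.ofScalars ℝ a).radius := by
    apply FormalMultilinearSeries.le_radius_of_bound _ C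
    intro n
    rw [FormalMultilinearSeries.ofScalars_norm, Real.coe_toNNReal _ hy0.le]
    exact hC n
  have hball := (FormalMultilinearSeries.ofScalars ℝ a).hasFPowerSeriesOnBall
    (lt_of_lt_of_le (by simpa using hy0) hrad)
  have heq : PS a = (FormalMultilinearSeries.ofScalars ℝ a).sum := by
    ext z
    change _ = FormalMultilinearSeries.ofScalarsSum a z
    rw [FormalMultilinearSeries.ofScalars_sum_eq]
    simp [PS, smul_eq_mul]
  rw [heq]
  apply hball.analyticAt_of_mem
  rw [Metric.mem_eball, edist_zero_right]
  refine lt_of_lt_of_le ?_ hrad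
  rw [enorm_eq_nnnorm, ENNReal.coe_lt_coe, ← NNReal.coe_lt_coe,
    Real.coe_toNNReal _ hy0.le]
  exact hxy

lemma ConvOn.hasTheta {a : ℕ → ℝ} {ρ x : ℝ} (h : ConvOn a ρ) (hx : |x| < ρ) :
    HasTheta (PS a) (PS (thetaCoeff a) x) x := by
  obtain ⟨y, hxy, hy⟩ := exists_between hx
  have hy0 : 0 < y := lt_of_le_of_lt (abs_nonneg x) hxy
  have hsum : Summable fun n : ℕ => |thetaCoeff a n * y ^ n| / y :=
    ((h.theta y (by rwa [abs_of_pos hy0])).abs).div_const y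
  have hd : HasDerivAt (PS a) (∑' n : ℕ, a n * (n * x ^ (n - 1))) x := by
    refine hasDerivAt_tsum_of_isPreconnected (t := Set.Ioo (-y) y) (y₀ := 0)
      (g := fun n z => a n * z ^ n) hsum isOpen_Ioo
      isPreconnected_Ioo (fun n z _ => (hasDerivAt_pow n z).const_mul (a n)) ?_
      ⟨by linarith, hy0⟩ ?_ (abs_lt.mp hxy)
    · intro n z hz
      have hz' : |z| ≤ y := (abs_lt.mpr hz).le
      rcases n with _ | n
      · simp [thetaCoeff]
      · simp only [thetaCoeff, norm_mul, norm_pow, Real.norm_eq_abs, Nat.abs_cast, abs_mul, abs_pow,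
          Nat.add_sub_cancel, abs_of_pos hy0]
        rw [pow_succ, ← mul_assoc _ (y ^ n), mul_div_cancel_right₀ _ hy0.ne', ← mul_assoc,
          mul_comm |a (n+1)|]
        gcongr
    · exact h 0 (by simpa using lt_of_le_of_lt (abs_nonneg x) hx)
  refine ⟨_, hd, ?_⟩
  rw [PS, ← tsum_mul_left]
  congr 1
  ext n
  rcases n with _ | n
  · simp [thetaCoeff]
  · simp only [thetaCoeff, Nat.add_sub_cancel]
    ring

lemma PS_zero (a : ℕ → ℝ) : PS a 0 = a 0 := by
  rw [PS, tsum_eq_single 0]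
  · simp
  · intro n hn; simp [hn]

lemma ConvOn.shift {a : ℕ → ℝ} {ρ x : ℝ} (h : ConvOn a ρ) (hx : |x| < ρ) :
    PS a x = a 0 + x * ∑' n, a (n + 1) * x ^ n ∧ Summable fun n => a (n + 1) * x ^ n := by
  have hs := h x hx
  have hs1 : Summable fun n => a (n + 1) * x ^ n := by
    rcases eq_or_ne x 0 with rfl | hx0
    · refine summable_of_ne_finset_zero (s := {0}) fun n hn => ?_
      simp at hn
      simp [hn]
    · have := ((summable_nat_add_iff 1).mpr hs).mul_left x⁻¹
      refine this.congr fun n => ?_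
      rw [pow_succ]
      field_simp
  refine ⟨?_, hs1⟩
  rw [PS, hs.tsum_eq_zero_add, ← tsum_mul_left]
  simp [pow_succ]
  congr 1; ext n; ring

/-- Applying a cubic polynomial in `θ` to a power series multiplies the `n`-th coefficient by the
value of the polynomial at `n`. -/
lemma ConvOn.poly {a : ℕ → ℝ} {ρ : ℝ} (h : ConvOn a ρ) (p0 p1 p2 p3 : ℝ) :
    ConvOn (fun n => (p0 + p1 * n + p2 * n ^ 2 + p3 * n ^ 3) * a n) ρ ∧
    ∀ x, |x| < ρ → PS (fun n => (p0 + p1 * n + p2 * n ^ 2 + p3 * n ^ 3) * a n) x =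
      p0 * PS a x + p1 * PS (thetaCoeff a) x + p2 * PS (thetaCoeff (thetaCoeff a)) x +
        p3 * PS (thetaCoeff (thetaCoeff (thetaCoeff a))) x := by
  have key : ∀ x, |x| < ρ →
      HasSum (fun n => (p0 + p1 * n + p2 * n ^ 2 + p3 * n ^ 3) * a n * x ^ n)
      (p0 * PS a x + p1 * PS (thetaCoeff a) x + p2 * PS (thetaCoeff (thetaCoeff a)) x +
        p3 * PS (thetaCoeff (thetaCoeff (thetaCoeff a))) x) := by
    intro x hx
    have h0 := (h x hx).hasSum.mul_left p0
    have h1 := (h.theta x hx).hasSum.mul_left p1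
    have h2 := (h.theta.theta x hx).hasSum.mul_left p2
    have h3 := (h.theta.theta.theta x hx).hasSum.mul_left p3
    refine (((h0.add h1).add h2).add h3).congr_fun ?_
    intro n
    simp only [thetaCoeff]
    ring
  exact ⟨fun x hx => (key x hx).summable, fun x hx => (key x hx).tsum_eq⟩

/-! ### The hypergeometric series -/

lemma poch_succ (a : ℝ) (n : ℕ) : poch a (n + 1) = poch a n * (a + n) := by
  simp [poch, Finset.prod_range_succ]

lemma poch_succ' (a : ℝ) (n : ℕ) : poch a (n + 1) = a * poch (a + 1) n := by
  simp only [poch, Finset.prod_range_succ']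
  rw [mul_comm]
  congr 1
  · simp
  · refine Finset.prod_congr rfl fun i _ => ?_
    push_cast; ring

lemma poch_one (n : ℕ) : poch 1 n = n.factorial := by
  induction n with
  | zero => simp [poch]
  | succ n ih => rw [poch_succ, ih, Nat.factorial_succ]; push_cast; ring

lemma poch_bound {a : ℝ} (h0 : 0 ≤ a) (h1 : a ≤ 1) (n : ℕ) :
    0 ≤ poch a n ∧ poch a n ≤ n.factorial := by
  rw [← poch_one]
  refine ⟨Finset.prod_nonneg fun i _ => by positivity, Finset.prod_le_prod (fun i _ => by positivity)
    fun i _ => by linarith⟩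

/-- Coefficients of `H = ₃F₂(1/4,1/2,3/4;1,1;x)`. -/
noncomputable def hc (n : ℕ) : ℝ :=
  poch (1/4) n * poch (1/2) n * poch (3/4) n / (n.factorial : ℝ) ^ 3

/-- Coefficients of `₂F₁(1/4,3/4;1;t)`. -/
noncomputable def fc (n : ℕ) : ℝ := poch (1/4) n * poch (3/4) n / (n.factorial : ℝ) ^ 2

lemma hc_zero : hc 0 = 1 := by simp [hc, poch]

lemma fc_zero : fc 0 = 1 := by simp [fc, poch]

lemma hc_succ (n : ℕ) :
    ((n:ℝ) + 1) ^ 3 * hc (n + 1) = (3/32 + 11/16 * n + 3/2 * n ^ 2 + 1 * n ^ 3) * hc n := by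
  have : (n.factorial : ℝ) ≠ 0 := by positivity
  simp only [hc, poch_succ, Nat.factorial_succ]
  push_cast
  field_simp
  ring

lemma fc_succ (n : ℕ) :
    ((n:ℝ) + 1) ^ 2 * fc (n + 1) = (3/16 + 1 * n + 1 * n ^ 2 + 0 * n ^ 3) * fc n := by
  have : (n.factorial : ℝ) ≠ 0 := by positivity
  simp only [fc, poch_succ, Nat.factorial_succ]
  push_cast
  field_simp
  ring

lemma hc_bound (n : ℕ) : 0 ≤ hc n ∧ hc n ≤ 1 := by
  obtain ⟨a1, a2⟩ := poch_bound (a := 1/4) (by norm_num) (by norm_num) n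
  obtain ⟨b1, b2⟩ := poch_bound (a := 1/2) (by norm_num) (by norm_num) n
  obtain ⟨c1, c2⟩ := poch_bound (a := 3/4) (by norm_num) (by norm_num) n
  refine ⟨by unfold hc; positivity, ?_⟩
  unfold hc
  apply div_le_one_of_le₀ _ (by positivity)
  calc _ ≤ (n.factorial : ℝ) * n.factorial * n.factorial := by gcongr
    _ = _ := by ring

lemma fc_bound (n : ℕ) : 0 ≤ fc n ∧ fc n ≤ 1 := by
  obtain ⟨a1, a2⟩ := poch_bound (a := 1/4) (by norm_num) (by norm_num) n
  obtain ⟨c1, c2⟩ := poch_bound (a := 3/4) (by norm_num) (by norm_num) n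
  refine ⟨by unfold fc; positivity, ?_⟩
  unfold fc
  apply div_le_one_of_le₀ _ (by positivity)
  calc _ ≤ (n.factorial : ℝ) * n.factorial := by gcongr
    _ = _ := by ring

lemma hc_conv : ConvOn hc 1 := by
  have := convOn_of_bound (a := hc) one_pos fun n => by
    rw [abs_of_nonneg (hc_bound n).1, one_pow]; exact (hc_bound n).2
  simpa using this

lemma fc_conv : ConvOn fc 1 := by
  have := convOn_of_bound (a := fc) one_pos fun n => by
    rw [abs_of_nonneg (fc_bound n).1, one_pow]; exact (fc_bound n).2
  simpa using this

lemma F21_eq : F21 = PS fc := by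
  ext t
  simp only [F21, PS, fc, poch_one]
  congr 1; ext n
  have : (n.factorial : ℝ) ≠ 0 := by positivity
  field_simp

/-- The hypergeometric equation of `H`: `θ³H = x (θ + 1/4)(θ + 1/2)(θ + 3/4) H`. -/
lemma hc_ode {x : ℝ} (hx : |x| < 1) :
    PS (thetaCoeff (thetaCoeff (thetaCoeff hc))) x = x * (3/32 * PS hc x +
      11/16 * PS (thetaCoeff hc) x + 3/2 * PS (thetaCoeff (thetaCoeff hc)) x +
      1 * PS (thetaCoeff (thetaCoeff (thetaCoeff hc))) x) := by
  rw [← (hc_conv.poly (3/32) (11/16) (3/2) 1).2 x hx, (hc_conv.theta.theta.theta.shift hx).1, PS]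
  have : thetaCoeff (thetaCoeff (thetaCoeff hc)) 0 = 0 := by simp [thetaCoeff]
  rw [this, zero_add]
  congr 2; ext n
  rw [← hc_succ]
  simp only [thetaCoeff]
  push_cast; ring

/-- The hypergeometric equation `θ²F = t (θ + 1/4)(θ + 3/4) F` of `F = ₂F₁(1/4,3/4;1;t)`. -/
lemma fc_ode {x : ℝ} (hx : |x| < 1) :
    PS (thetaCoeff (thetaCoeff fc)) x = x * (3/16 * PS fc x +
      1 * PS (thetaCoeff fc) x + 1 * PS (thetaCoeff (thetaCoeff fc)) x +
      0 * PS (thetaCoeff (thetaCoeff (thetaCoeff fc))) x) := by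
  rw [← (fc_conv.poly (3/16) 1 1 0).2 x hx, (fc_conv.theta.theta.shift hx).1, PS]
  have : thetaCoeff (thetaCoeff fc) 0 = 0 := by simp [thetaCoeff]
  rw [this, zero_add]
  congr 2; ext n
  rw [← fc_succ]
  simp only [thetaCoeff]
  push_cast; ring

/-! ### The simple cubic lattice numbers -/

/-- The honeycomb numbers `∑ₖ C(2k,k) C(n,k)²`. -/
noncomputable def hex (n : ℕ) : ℝ :=
  ∑ k ∈ Finset.range (n + 1), ((2 * k).choose k : ℝ) * ((n.choose k : ℝ)) ^ 2

/-- The simple cubic lattice numbers `C(2n,n) ∑ₖ C(2k,k) C(n,k)²`. -/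
noncomputable def sc (n : ℕ) : ℝ := ((2 * n).choose n : ℝ) * hex n

lemma choose_central_succ (k : ℕ) :
    ((k:ℝ) + 1) * ((2 * (k + 1)).choose (k + 1) : ℝ) = 2 * (2 * k + 1) * ((2 * k).choose k : ℝ) := by
  have := Nat.succ_mul_centralBinom_succ k
  simp only [Nat.centralBinom] at this
  exact_mod_cast this

lemma choose_pred (N k : ℕ) :
    ((N:ℝ) + 1) * (N.choose k : ℝ) = ((N + 1).choose k : ℝ) * (N + 1 - k) := by
  rcases le_or_gt k (N + 1) with h | h
  · have := Nat.choose_mul_succ_eq N k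
    zify [h] at this
    have h2 : ((N.choose k : ℝ)) * (N + 1) = ((N + 1).choose k : ℝ) * (N + 1 - k) := by
      exact_mod_cast this
    linarith
  · rw [Nat.choose_eq_zero_of_lt h, Nat.choose_eq_zero_of_lt (by omega)]
    simp

lemma choose_next (N k : ℕ) :
    ((k:ℝ) + 1) * (N.choose (k + 1) : ℝ) = (N.choose k : ℝ) * (N - k) := by
  rcases le_or_gt k N with h | h
  · have := Nat.choose_succ_right_eq N k
    zify [h] at this
    have h2 : (N.choose (k + 1) : ℝ) * (k + 1) = (N.choose k : ℝ) * (N - k) := by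
      exact_mod_cast this
    linarith
  · rw [Nat.choose_eq_zero_of_lt h, Nat.choose_eq_zero_of_lt (by omega)]
    simp

lemma hex_eq {n K : ℕ} (h : n + 1 ≤ K) :
    hex n = ∑ k ∈ Finset.range K, ((2 * k).choose k : ℝ) * ((n.choose k : ℝ)) ^ 2 := by
  rw [hex]
  apply Finset.sum_subset (by simpa using h)
  intro k _ hk
  have hk : n < k := by simpa using hk
  rw [Nat.choose_eq_zero_of_lt hk]
  simp

/-- Creative telescoping for the honeycomb numbers. The partial sums of the recurrence operator
applied to the summand are `(3K - 4(n+2)) K³ / (n+2)² · C(2K,K) C(n+2,K)²`. -/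
lemma hex_telescope (n K : ℕ) :
    ∑ k ∈ Finset.range K, (((n:ℝ) + 2) ^ 2 * (((2 * k).choose k : ℝ) * (((n + 2).choose k : ℝ)) ^ 2)
      - (10 * ((n:ℝ) + 1) ^ 2 + 10 * (n + 1) + 3) *
        (((2 * k).choose k : ℝ) * (((n + 1).choose k : ℝ)) ^ 2)
      + 9 * ((n:ℝ) + 1) ^ 2 * (((2 * k).choose k : ℝ) * ((n.choose k : ℝ)) ^ 2))
    = (3 * K - 4 * ((n:ℝ) + 2)) * K ^ 3 / ((n:ℝ) + 2) ^ 2 *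
        (((2 * K).choose K : ℝ) * (((n + 2).choose K : ℝ)) ^ 2) := by
  induction K with
  | zero => simp
  | succ K ih =>
    rw [Finset.sum_range_succ, ih]
    have e1 : ((n + 1).choose K : ℝ) = ((n + 2).choose K : ℝ) * (n + 2 - K) / (n + 2) := by
      have := choose_pred (n + 1) K
      push_cast at this
      field_simp
      linarith
    have e2 : (n.choose K : ℝ) =
        ((n + 2).choose K : ℝ) * (n + 2 - K) * (n + 1 - K) / ((n + 2) * (n + 1)) := by
      have := choose_pred n K
      rw [e1] at this
      field_simp at this ⊢
      linarith
    have e3 : ((n + 2).choose (K + 1) : ℝ) = ((n + 2).choose K : ℝ) * (n + 2 - K) / (K + 1) := by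
      have := choose_next (n + 2) K
      push_cast at this
      field_simp
      linarith
    have e4 : ((2 * (K + 1)).choose (K + 1) : ℝ) =
        2 * (2 * K + 1) * ((2 * K).choose K : ℝ) / (K + 1) := by
      have := choose_central_succ K
      field_simp
      linarith
    rw [e1, e2, e3, e4]
    push_cast
    field_simp
    ring

lemma hex_rec (n : ℕ) :
    ((n:ℝ) + 2) ^ 2 * hex (n + 2) = (10 * ((n:ℝ) + 1) ^ 2 + 10 * (n + 1) + 3) * hex (n + 1)
      - 9 * ((n:ℝ) + 1) ^ 2 * hex n := by
  have h := hex_telescope n (n + 3)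
  rw [Nat.choose_eq_zero_of_lt (show n + 2 < n + 3 by omega), Finset.sum_add_distrib,
    Finset.sum_sub_distrib, ← Finset.mul_sum, ← Finset.mul_sum, ← Finset.mul_sum,
    ← hex_eq (by omega), ← hex_eq (by omega), ← hex_eq (by omega)] at h
  simp at h
  linarith

lemma sc_rec (n : ℕ) :
    ((n:ℝ) + 2) ^ 3 * sc (n + 2) = (6 + 32 * (n + 1) + 60 * (n + 1) ^ 2 + 40 * (n + 1) ^ 3) * sc (n + 1)
      + (-108 + -396 * n + -432 * n ^ 2 + -144 * n ^ 3) * sc n := by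
  have h := hex_rec n
  have c1 := choose_central_succ n
  have c2 := choose_central_succ (n + 1)
  push_cast at c2
  simp only [sc]
  have c2' : ((2 * (n + 2)).choose (n + 2) : ℝ) =
      2 * (2 * (n + 1) + 1) * ((2 * (n + 1)).choose (n + 1) : ℝ) / (n + 2) := by
    field_simp; linarith
  have c1' : ((2 * n).choose n : ℝ) =
     (n + 1) * ((2 * (n + 1)).choose (n + 1) : ℝ) / (2 * (2 * n + 1)) := by
    field_simp; linarith
  rw [c2', c1']
  field_simp
  linear_combination 4 * (2 * (n:ℝ) + 3) * (2 * n + 1) * ((2 * (n + 1)).choose (n + 1) : ℝ) * h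

lemma sc_zero : sc 0 = 1 := by simp [sc, hex]

lemma sc_one : sc 1 = 6 := by
  simp [sc, hex, Finset.sum_range_succ, Nat.choose]; norm_num

lemma sc_bound (n : ℕ) : 0 ≤ sc n ∧ sc n ≤ 36 ^ n := by
  have hc4 : ∀ k : ℕ, ((2 * k).choose k : ℝ) ≤ 4 ^ k := fun k => by
    have : (2 * k).choose k ≤ 2 ^ (2 * k) := Nat.choose_le_two_pow _ _
    rw [pow_mul] at this
    exact_mod_cast this
  have h0 : 0 ≤ hex n := Finset.sum_nonneg fun k _ => by positivity
  have h9 : hex n ≤ 9 ^ n := by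
    calc hex n ≤ ∑ k ∈ Finset.range (n + 1), ((2:ℝ) ^ k * n.choose k) ^ 2 := by
          apply Finset.sum_le_sum
          intro k _
          rw [mul_pow, ← pow_mul, mul_comm k, pow_mul]
          norm_num
          gcongr
          exact hc4 k
      _ ≤ (∑ k ∈ Finset.range (n + 1), (2:ℝ) ^ k * n.choose k) ^ 2 :=
          Finset.sum_sq_le_sq_sum_of_nonneg fun k _ => by positivity
      _ = 9 ^ n := by
          have := add_pow (2:ℝ) 1 n
          simp only [one_pow, mul_one] at this
          rw [← this, ← pow_mul, mul_comm, pow_mul]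
          norm_num
  refine ⟨by unfold sc; positivity, ?_⟩
  calc sc n ≤ 4 ^ n * 9 ^ n := by
        unfold sc
        exact mul_le_mul (hc4 n) h9 h0 (by positivity)
    _ = 36 ^ n := by rw [← mul_pow]; norm_num

lemma sc_conv : ConvOn sc (1 / 36) :=
  convOn_of_bound (by norm_num) fun n => by
    rw [abs_of_nonneg (sc_bound n).1]; exact (sc_bound n).2

/-- The differential equation of the simple cubic lattice Green function. -/
lemma sc_ode {x : ℝ} (hx : |x| < 1 / 36) :
    PS (thetaCoeff (thetaCoeff (thetaCoeff sc))) x = x * (6 * PS sc x +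
      32 * PS (thetaCoeff sc) x + 60 * PS (thetaCoeff (thetaCoeff sc)) x +
      40 * PS (thetaCoeff (thetaCoeff (thetaCoeff sc))) x) + x * (x * (-108 * PS sc x +
      -396 * PS (thetaCoeff sc) x + -432 * PS (thetaCoeff (thetaCoeff sc)) x +
      -144 * PS (thetaCoeff (thetaCoeff (thetaCoeff sc))) x)) := by
  obtain ⟨hd, hd'⟩ := sc_conv.poly 6 32 60 40
  rw [← hd' x hx, ← (sc_conv.poly (-108) (-396) (-432) (-144)).2 x hx]
  have h3 := sc_conv.theta.theta.theta
  have h30 : thetaCoeff (thetaCoeff (thetaCoeff sc)) 0 = 0 := by simp [thetaCoeff]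
  rw [(h3.shift hx).1, h30, zero_add, ← mul_add]
  congr 1
  have he : ConvOn (fun n => thetaCoeff (thetaCoeff (thetaCoeff sc)) (n + 1) -
      (6 + 32 * (n:ℝ) + 60 * n ^ 2 + 40 * n ^ 3) * sc n) (1 / 36) := fun y hy => by
    refine ((h3.shift hy).2.sub (hd y hy)).congr fun n => ?_
    ring
  have hs := (he.shift hx).1
  have e0 : thetaCoeff (thetaCoeff (thetaCoeff sc)) (0 + 1) -
      (6 + 32 * ((0:ℕ):ℝ) + 60 * (0:ℕ) ^ 2 + 40 * (0:ℕ) ^ 3) * sc 0 = 0 := by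
    simp [thetaCoeff, sc_one, sc_zero]
  rw [e0, zero_add] at hs
  have e1 : PS (fun n => (-108 + -396 * (n:ℝ) + -432 * n ^ 2 + -144 * n ^ 3) * sc n) x =
      ∑' n : ℕ, (thetaCoeff (thetaCoeff (thetaCoeff sc)) (n + 1 + 1) -
      (6 + 32 * ((n + 1 : ℕ):ℝ) + 60 * ((n + 1 : ℕ):ℝ) ^ 2 + 40 * ((n + 1 : ℕ):ℝ) ^ 3) * sc (n + 1))
        * x ^ n := by
    rw [PS]
    congr 1; ext n
    congr 1
    have := sc_rec n
    simp only [thetaCoeff]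
    push_cast
    rw [show n + 1 + 1 = n + 2 by ring]
    linear_combination -this
  rw [e1, ← hs, PS, PS, ← (hd x hx).tsum_add (he x hx)]
  congr 1; ext n
  ring

/-! ### Pullbacks of the differential equations -/

/-- `θ((1 - q) v) = (1 - q)(θv - q v)` when `θq = q (1 - q)`. -/
lemma theta_prefactor {q v : ℝ → ℝ} {v' u : ℝ} (hq : HasTheta q (q u * (1 - q u)) u)
    (hv : HasTheta v v' u) :
    HasTheta (fun u => (1 - q u) * v u) ((1 - q u) * (v' - q u * v u)) u :=
  (((HasTheta.const 1 u).sub hq).mul hv).congr_val (by ring)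

/-- With `θq = q (1 - q)` and `θfᵢ = (m - k q) fᵢ₊₁`, the function `(1 - q) · pull1` is
`θ((1 - q) f₀)`. -/
def pull1 (m k q f0 f1 : ℝ) : ℝ := (m - k * q) * f1 - q * f0

/-- In the setting of `pull1`, the function `(1 - q) · pull2` is `θ²((1 - q) f₀)`. -/
def pull2 (m k q f0 f1 f2 : ℝ) : ℝ :=
  (m - k * q) * (m - k * q) * f2 - (k * (q - q * q) + 2 * q * (m - k * q)) * f1 +
    (2 * (q * q) - q) * f0

/-- In the setting of `pull1`, the function `(1 - q) · pull3` is `θ³((1 - q) f₀)`. -/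
def pull3 (m k q f0 f1 f2 f3 : ℝ) : ℝ :=
  (m - k * q) ^ 3 * f3 - 2 * (m - k * q) * (k * (q * (1 - q))) * f2
    - (k * (q * (1 - q)) + 2 * q * (m - k * q)) * (m - k * q) * f2
    - (k * (1 - 2 * q) + 2 * (m - k * q) - 2 * q * k) * (q * (1 - q)) * f1
    + (2 * q ^ 2 - q) * (m - k * q) * f1 + (4 * q - 1) * (q * (1 - q)) * f0
    - q * pull2 m k q f0 f1 f2

/-- The `θ`-derivatives up to order three of `(1 - q) · (f ∘ φ)`, for a power series `f` with
coefficients `a`. -/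
lemma pull_tower {a : ℕ → ℝ} {ρ m k : ℝ} {q φ : ℝ → ℝ} {u : ℝ} (ha : ConvOn a ρ)
    (hρ : |φ u| < ρ) (hq : HasTheta q (q u * (1 - q u)) u)
    (hφ : HasTheta φ ((m - k * q u) * φ u) u) :
    HasTheta (fun u => (1 - q u) * PS a (φ u))
      ((1 - q u) * pull1 m k (q u) (PS a (φ u)) (PS (thetaCoeff a) (φ u))) u ∧
    HasTheta (fun u => (1 - q u) * pull1 m k (q u) (PS a (φ u)) (PS (thetaCoeff a) (φ u)))
      ((1 - q u) * pull2 m k (q u) (PS a (φ u)) (PS (thetaCoeff a) (φ u))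
        (PS (thetaCoeff (thetaCoeff a)) (φ u))) u ∧
    HasTheta (fun u => (1 - q u) * pull2 m k (q u) (PS a (φ u)) (PS (thetaCoeff a) (φ u))
        (PS (thetaCoeff (thetaCoeff a)) (φ u)))
      ((1 - q u) * pull3 m k (q u) (PS a (φ u)) (PS (thetaCoeff a) (φ u))
        (PS (thetaCoeff (thetaCoeff a)) (φ u))
        (PS (thetaCoeff (thetaCoeff (thetaCoeff a))) (φ u))) u := by
  have h0 := (ha.hasTheta hρ).comp hφ
  have h1 := (ha.theta.hasTheta hρ).comp hφ
  have h2 := (ha.theta.theta.hasTheta hρ).comp hφ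
  have hs : HasTheta (fun u => m - k * q u) (- k * (q u * (1 - q u))) u :=
    ((HasTheta.const m u).sub ((HasTheta.const k u).mul hq)).congr_val (by ring)
  have hqq : HasTheta (fun u => q u * q u) (2 * q u * (q u * (1 - q u))) u :=
    (hq.mul hq).congr_val (by ring)
  refine ⟨(theta_prefactor hq h0).congr_val ?_, ?_, ?_⟩
  · simp only [pull1]
  · have hv : HasTheta (fun u => pull1 m k (q u) (PS a (φ u)) (PS (thetaCoeff a) (φ u))) _ u :=
      (hs.mul h1).sub (hq.mul h0)
    refine (theta_prefactor hq hv).congr_val ?_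
    simp only [pull1, pull2]
    ring
  · have hv : HasTheta (fun u => pull2 m k (q u) (PS a (φ u)) (PS (thetaCoeff a) (φ u))
        (PS (thetaCoeff (thetaCoeff a)) (φ u))) _ u :=
      ((((hs.mul hs).mul h2).sub ((((HasTheta.const k u).mul (hq.sub hqq)).add
        (((HasTheta.const 2 u).mul hq).mul hs)).mul h1)).add
        ((((HasTheta.const 2 u).mul hqq).sub hq).mul h0))
    refine (theta_prefactor hq hv).congr_val ?_
    simp only [pull3, pull2]
    ring

/-- The argument `256 u³ / (9 (3 + u)⁴)` of `H`. -/
noncomputable def X1 (u : ℝ) : ℝ := 256 * u ^ 3 / (9 * (3 + u) ^ 4)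

/-- The argument `256 u / (9 (1 + 3u)⁴)` of `H`; this is `X1 (1 / u)`. -/
noncomputable def X2 (u : ℝ) : ℝ := 256 * u / (9 * (1 + 3 * u) ^ 4)

/-- The argument `u / (9 (1 + u)²)` of the lattice Green function. -/
noncomputable def Z (u : ℝ) : ℝ := u / (9 * (1 + u) ^ 2)

/-- `θq = q (1 - q)` for `q = αu / (β + αu)`. -/
lemma q_theta {α β u : ℝ} (h : β + α * u ≠ 0) :
    HasTheta (fun u => α * u / (β + α * u))
      (α * u / (β + α * u) * (1 - α * u / (β + α * u))) u := by
  have h1 : HasDerivAt (fun u : ℝ => α * u) α u := by simpa using (hasDerivAt_id u).const_mul α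
  refine ⟨_, h1.div (h1.const_add β) h, ?_⟩
  generalize hE : β + α * u = E at h ⊢
  field_simp

lemma X1_theta {u : ℝ} (h : 3 + u ≠ 0) : HasTheta X1 ((3 - 4 * (1 * u / (3 + 1 * u))) * X1 u) u := by
  have h1 : HasDerivAt (fun u : ℝ => 256 * u ^ 3) _ u := (hasDerivAt_pow 3 u).const_mul 256
  have h2 : HasDerivAt (fun u : ℝ => 9 * (3 + u) ^ 4) _ u :=
    (((hasDerivAt_id u).const_add 3).pow 4).const_mul 9
  refine ⟨_, h1.div h2 (by simpa using h), ?_⟩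
  simp only [X1, one_mul, id]
  field_simp
  ring

lemma X2_theta {u : ℝ} (h : 1 + 3 * u ≠ 0) :
    HasTheta X2 ((1 - 4 * (3 * u / (1 + 3 * u))) * X2 u) u := by
  have h1 : HasDerivAt (fun u : ℝ => 256 * u) _ u := (hasDerivAt_id u).const_mul 256
  have h2 : HasDerivAt (fun u : ℝ => 9 * (1 + 3 * u) ^ 4) _ u :=
    ((((hasDerivAt_id u).const_mul 3).const_add 1).pow 4).const_mul 9
  refine ⟨_, h1.div h2 (by simpa using h), ?_⟩
  simp only [X2, id]
  generalize hE : 1 + 3 * u = E at h ⊢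
  field_simp
  rw [← hE]
  ring

lemma Z_theta {u : ℝ} (h : 1 + u ≠ 0) : HasTheta Z ((1 - 2 * (1 * u / (1 + 1 * u))) * Z u) u := by
  have h2 : HasDerivAt (fun u : ℝ => 9 * (1 + u) ^ 2) _ u :=
    (((hasDerivAt_id u).const_add 1).pow 2).const_mul 9
  refine ⟨_, (hasDerivAt_id u).div h2 (by simpa using h), ?_⟩
  simp only [Z, one_mul, id]
  field_simp
  ring

lemma X1_analytic {u : ℝ} (h : 3 + u ≠ 0) : AnalyticAt ℝ X1 u := by
  unfold X1
  exact AnalyticAt.div (by fun_prop) (by fun_prop) (by simpa using h)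

lemma X2_analytic {u : ℝ} (h : 1 + 3 * u ≠ 0) : AnalyticAt ℝ X2 u := by
  unfold X2
  exact AnalyticAt.div (by fun_prop) (by fun_prop) (by simpa using h)

lemma Z_analytic {u : ℝ} (h : 1 + u ≠ 0) : AnalyticAt ℝ Z u := by
  unfold Z
  exact AnalyticAt.div (by fun_prop) (by fun_prop) (by simpa using h)

lemma eventually_small {φ : ℝ → ℝ} {ρ : ℝ} (hρ : 0 < ρ) (h : AnalyticAt ℝ φ 0) (h0 : φ 0 = 0) :
    ∀ᶠ u in 𝓝 0, |φ u| < ρ := by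
  have := h.continuousAt.abs.tendsto
  simp only [h0, abs_zero] at this
  exact this.eventually_lt_const hρ

lemma eventually_aff (α β : ℝ) (hβ : β ≠ 0) : ∀ᶠ u in 𝓝 (0:ℝ), β + α * u ≠ 0 := by
  have : ContinuousAt (fun u : ℝ => β + α * u) 0 := by fun_prop
  exact this.eventually_ne (by simpa using hβ)

/-- Coefficients of the equation
`(9 + 14u + 9u²) θ³y = -u (21θ² + 13θ + 3) y - 9u² (3θ² + 3θ + 1) y` of the Almkvist–Zudilin
numbers, common to the three pullbacks. -/
noncomputable def C0 (u : ℝ) : ℝ := -(3 + 9 * u) / (9 + 14 * u + 9 * u ^ 2)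
/-- See `C0`. -/
noncomputable def C1 (u : ℝ) : ℝ := -(13 + 27 * u) / (9 + 14 * u + 9 * u ^ 2)
/-- See `C0`. -/
noncomputable def C2 (u : ℝ) : ℝ := -(21 + 27 * u) / (9 + 14 * u + 9 * u ^ 2)

lemma quad_ne (u : ℝ) : 9 + 14 * u + 9 * u ^ 2 ≠ 0 := by nlinarith [sq_nonneg (9 * u + 7)]

lemma X1_ode {u f0 f1 f2 f3 : ℝ} (h : 3 + u ≠ 0)
    (hf : f3 = X1 u * (3/32 * f0 + 11/16 * f1 + 3/2 * f2 + 1 * f3)) :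
    (1 - 1 * u / (3 + 1 * u)) * pull3 3 4 (1 * u / (3 + 1 * u)) f0 f1 f2 f3 =
      u * (C0 u * ((1 - 1 * u / (3 + 1 * u)) * f0) +
        C1 u * ((1 - 1 * u / (3 + 1 * u)) * pull1 3 4 (1 * u / (3 + 1 * u)) f0 f1) +
        C2 u * ((1 - 1 * u / (3 + 1 * u)) * pull2 3 4 (1 * u / (3 + 1 * u)) f0 f1 f2)) := by
  have hD := quad_ne u
  simp only [X1, C0, C1, C2, pull1, pull2, pull3, one_mul] at hf ⊢
  generalize hE : 9 + 14 * u + 9 * u ^ 2 = E at hD ⊢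
  -- The multiplier is the ratio of the coefficients of the third derivative
  -- in the goal and in the hypothesis.
  linear_combination (norm := skip) 27 * (9 - u) / E * hf
  field_simp
  rw [← hE]
  ring

lemma X2_ode {u f0 f1 f2 f3 : ℝ} (h : 1 + 3 * u ≠ 0)
    (hf : f3 = X2 u * (3/32 * f0 + 11/16 * f1 + 3/2 * f2 + 1 * f3)) :
    (1 - 3 * u / (1 + 3 * u)) * pull3 1 4 (3 * u / (1 + 3 * u)) f0 f1 f2 f3 =
      u * (C0 u * ((1 - 3 * u / (1 + 3 * u)) * f0) +
        C1 u * ((1 - 3 * u / (1 + 3 * u)) * pull1 1 4 (3 * u / (1 + 3 * u)) f0 f1) +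
        C2 u * ((1 - 3 * u / (1 + 3 * u)) * pull2 1 4 (3 * u / (1 + 3 * u)) f0 f1 f2)) := by
  have hD := quad_ne u
  simp only [X2, C0, C1, C2, pull1, pull2, pull3] at hf ⊢
  generalize hE : 9 + 14 * u + 9 * u ^ 2 = E at hD ⊢
  -- The multiplier is the ratio of the coefficients of the third derivative
  -- in the goal and in the hypothesis.
  linear_combination (norm := skip) 9 * (1 - 9 * u) / E * hf
  field_simp
  rw [← hE]
  ring

lemma Z_ode {u f0 f1 f2 f3 : ℝ} (h : 1 + u ≠ 0)
    (hf : f3 = Z u * (6 * f0 + 32 * f1 + 60 * f2 + 40 * f3) +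
      Z u * (Z u * (-108 * f0 + -396 * f1 + -432 * f2 + -144 * f3))) :
    (1 - 1 * u / (1 + 1 * u)) * pull3 1 2 (1 * u / (1 + 1 * u)) f0 f1 f2 f3 =
      u * (C0 u * ((1 - 1 * u / (1 + 1 * u)) * f0) +
        C1 u * ((1 - 1 * u / (1 + 1 * u)) * pull1 1 2 (1 * u / (1 + 1 * u)) f0 f1) +
        C2 u * ((1 - 1 * u / (1 + 1 * u)) * pull2 1 2 (1 * u / (1 + 1 * u)) f0 f1 f2)) := by
  have hD := quad_ne u
  simp only [Z, C0, C1, C2, pull1, pull2, pull3, one_mul] at hf ⊢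
  generalize hE : 9 + 14 * u + 9 * u ^ 2 = E at hD ⊢
  -- The multiplier is the ratio of the coefficients of the third derivative
  -- in the goal and in the hypothesis.
  linear_combination (norm := skip) 9 * (1 - u) / E * hf
  field_simp
  rw [← hE]
  ring

lemma C_cont : ContinuousAt C0 0 ∧ ContinuousAt C1 0 ∧ ContinuousAt C2 0 := by
  unfold C0 C1 C2
  refine ⟨?_, ?_, ?_⟩ <;> exact ContinuousAt.div (by fun_prop) (by fun_prop) (quad_ne 0)

lemma q_analytic {α β u : ℝ} (h : β + α * u ≠ 0) :
    AnalyticAt ℝ (fun u => 1 - α * u / (β + α * u)) u :=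
  AnalyticAt.sub (by fun_prop) (AnalyticAt.div (by fun_prop) (by fun_prop) h)

/-- `H(X2 u) / (1 + 3u) = H(X1 u) / (1 + u/3)` near `0`. -/
lemma X2_eq_X1 : (fun u => (1 - 3 * u / (1 + 3 * u)) * PS hc (X2 u)) =ᶠ[𝓝 0]
    fun u => (1 - 1 * u / (3 + 1 * u)) * PS hc (X1 u) := by
  have a1 : ∀ᶠ u in 𝓝 0, |X1 u| < 1 :=
    eventually_small one_pos (X1_analytic (by norm_num)) (by simp [X1])
  have a2 : ∀ᶠ u in 𝓝 0, |X2 u| < 1 :=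
    eventually_small one_pos (X2_analytic (by norm_num)) (by simp [X2])
  have n1 := eventually_aff 1 3 (by norm_num)
  have n2 := eventually_aff 3 1 (by norm_num)
  have t1 := (n1.and a1).mono fun u h => pull_tower hc_conv h.2 (q_theta h.1)
    (X1_theta (by simpa using h.1))
  have t2 := (n2.and a2).mono fun u h => pull_tower hc_conv h.2 (q_theta h.1) (X2_theta h.1)
  refine theta_unique₂ ?_ ?_ ?_ (t2.mono fun u h => h.1) (t2.mono fun u h => h.2.1)
    (t2.mono fun u h => h.2.2) (t1.mono fun u h => h.1) (t1.mono fun u h => h.2.1)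
    (t1.mono fun u h => h.2.2) C_cont.1 C_cont.2.1 C_cont.2.2 ?_ ?_
  · exact (q_analytic (by norm_num)).mul
      ((hc_conv.analyticAt a2.self_of_nhds).comp (X2_analytic (by norm_num)))
  · exact (q_analytic (by norm_num)).mul
      ((hc_conv.analyticAt a1.self_of_nhds).comp (X1_analytic (by norm_num)))
  · simp [X1, X2]
  · filter_upwards [n2, a2] with u h1 h2 using X2_ode h1 (hc_ode h2)
  · filter_upwards [n1, a1] with u h1 h2 using X1_ode (by simpa using h1) (hc_ode h2)

/-- `A(Z u) / (1 + u) = H(X1 u) / (1 + u/3)` near `0`, for the lattice Green function `A`. -/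
lemma Z_eq_X1 : (fun u => (1 - 1 * u / (1 + 1 * u)) * PS sc (Z u)) =ᶠ[𝓝 0]
    fun u => (1 - 1 * u / (3 + 1 * u)) * PS hc (X1 u) := by
  have a1 : ∀ᶠ u in 𝓝 0, |X1 u| < 1 :=
    eventually_small one_pos (X1_analytic (by norm_num)) (by simp [X1])
  have a2 : ∀ᶠ u in 𝓝 0, |Z u| < 1 / 36 :=
    eventually_small (by norm_num) (Z_analytic (by norm_num)) (by simp [Z])
  have n1 := eventually_aff 1 3 (by norm_num)
  have n2 := eventually_aff 1 1 (by norm_num)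
  have t1 := (n1.and a1).mono fun u h => pull_tower hc_conv h.2 (q_theta h.1)
    (X1_theta (by simpa using h.1))
  have t2 := (n2.and a2).mono fun u h => pull_tower sc_conv h.2 (q_theta h.1)
    (Z_theta (by simpa using h.1))
  refine theta_unique₂ ?_ ?_ ?_ (t2.mono fun u h => h.1) (t2.mono fun u h => h.2.1)
    (t2.mono fun u h => h.2.2) (t1.mono fun u h => h.1) (t1.mono fun u h => h.2.1)
    (t1.mono fun u h => h.2.2) C_cont.1 C_cont.2.1 C_cont.2.2 ?_ ?_
  · exact (q_analytic (by norm_num)).mul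
      ((sc_conv.analyticAt a2.self_of_nhds).comp (Z_analytic (by norm_num)))
  · exact (q_analytic (by norm_num)).mul
      ((hc_conv.analyticAt a1.self_of_nhds).comp (X1_analytic (by norm_num)))
  · simp [X1, Z, PS_zero, sc_zero, hc_zero]
  · filter_upwards [n2, a2] with u h1 h2 using Z_ode (by simpa using h1) (sc_ode h2)
  · filter_upwards [n1, a1] with u h1 h2 using X1_ode (by simpa using h1) (hc_ode h2)

/-! ### Clausen's formula -/

/-- `θτ = τ (1 + τ)` for `τ = t / (1 - t)`. -/
lemma tau_theta {t : ℝ} (h : 1 - t ≠ 0) :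
    HasTheta (fun t => t / (1 - t)) (t / (1 - t) * (1 + t / (1 - t))) t := by
  refine ⟨_, (hasDerivAt_id t).div ((hasDerivAt_id t).const_sub 1) h, ?_⟩
  simp only [id]
  field_simp
  ring

/-- Clausen's formula `₂F₁(1/4,3/4;1;t)² = ₃F₂(1/4,1/2,3/4;1,1;4t(1-t))` near `0`. -/
lemma clausen : (fun t => PS fc t * PS fc t) =ᶠ[𝓝 0] fun t => PS hc (4 * t * (1 - t)) := by
  have an : AnalyticAt ℝ (fun t : ℝ => 4 * t * (1 - t)) 0 := by fun_prop
  have a1 : ∀ᶠ t in 𝓝 (0:ℝ), |4 * t * (1 - t)| < 1 := eventually_small one_pos an (by simp)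
  have a2 : ∀ᶠ t in 𝓝 (0:ℝ), |t| < 1 := eventually_small one_pos analyticAt_id rfl
  have n1 : ∀ᶠ t in 𝓝 (0:ℝ), 1 - t ≠ 0 := by
    filter_upwards [eventually_aff (-1) 1 (by norm_num)] with t h
    intro h'; apply h; linarith
  have hφ : ∀ t : ℝ, 1 - t ≠ 0 →
      HasTheta (fun t => 4 * t * (1 - t)) ((1 - t / (1 - t)) * (4 * t * (1 - t))) t := fun t h => by
    refine ⟨_, ((hasDerivAt_id t).const_mul 4).mul ((hasDerivAt_id t).const_sub 1), ?_⟩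
    simp only [id]
    field_simp
    ring
  refine theta_unique₂
    (f1 := fun t => 2 * (PS fc t * PS (thetaCoeff fc) t))
    (f2 := fun t => 2 * (PS (thetaCoeff fc) t * PS (thetaCoeff fc) t)
      + 2 * (PS fc t * PS (thetaCoeff (thetaCoeff fc)) t))
    (f3 := fun t => 6 * (PS (thetaCoeff fc) t * PS (thetaCoeff (thetaCoeff fc)) t)
      + 2 * (PS fc t * PS (thetaCoeff (thetaCoeff (thetaCoeff fc))) t))
    (g1 := fun t => (1 - t / (1 - t)) * PS (thetaCoeff hc) (4 * t * (1 - t)))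
    (g2 := fun t => (1 - t / (1 - t)) * (1 - t / (1 - t)) *
        PS (thetaCoeff (thetaCoeff hc)) (4 * t * (1 - t))
      - t / (1 - t) * (1 + t / (1 - t)) * PS (thetaCoeff hc) (4 * t * (1 - t)))
    (g3 := fun t => (1 - t / (1 - t)) ^ 3 *
        PS (thetaCoeff (thetaCoeff (thetaCoeff hc))) (4 * t * (1 - t))
      - 3 * (1 - t / (1 - t)) * (t / (1 - t) * (1 + t / (1 - t))) *
        PS (thetaCoeff (thetaCoeff hc)) (4 * t * (1 - t))
      - t / (1 - t) * (1 + t / (1 - t)) * (1 + 2 * (t / (1 - t))) *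
        PS (thetaCoeff hc) (4 * t * (1 - t)))
    (c0 := fun t => 3/8 * (1 / (1 - t) - t / (1 - t) ^ 2))
    (c1 := fun t => 7/4 / (1 - t) - t / (1 - t) ^ 2)
    (c2 := fun t => 3 / (1 - t))
    ?_ ?_ ?_ ?_ ?_ ?_ ?_ ?_ ?_ ?_ ?_ ?_ ?_ ?_
  · have := fc_conv.analyticAt a2.self_of_nhds
    exact this.mul this
  · exact AnalyticAt.fun_comp (hc_conv.analyticAt a1.self_of_nhds) an
  · simp [PS_zero, fc_zero, hc_zero]
  · filter_upwards [a2] with t h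
    exact ((fc_conv.hasTheta h).mul (fc_conv.hasTheta h)).congr_val (by ring)
  · filter_upwards [a2] with t h
    exact ((HasTheta.const 2 t).mul ((fc_conv.hasTheta h).mul
      (fc_conv.theta.hasTheta h))).congr_val (by ring)
  · filter_upwards [a2] with t h
    exact (((HasTheta.const 2 t).mul ((fc_conv.theta.hasTheta h).mul
      (fc_conv.theta.hasTheta h))).add ((HasTheta.const 2 t).mul ((fc_conv.hasTheta h).mul
      (fc_conv.theta.theta.hasTheta h)))).congr_val (by ring)
  · filter_upwards [a1, n1] with t h1 h
    exact (hc_conv.hasTheta h1).comp (φ := fun t => 4 * t * (1 - t)) (hφ t h)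
  · filter_upwards [a1, n1] with t h1 h
    exact (((HasTheta.const 1 t).sub (tau_theta h)).mul ((hc_conv.theta.hasTheta h1).comp
      (φ := fun t => 4 * t * (1 - t)) (hφ t h))).congr_val (by ring)
  · filter_upwards [a1, n1] with t h1 h
    have hs := (HasTheta.const 1 t).sub (tau_theta h)
    have f1 := (hc_conv.theta.hasTheta h1).comp (φ := fun t => 4 * t * (1 - t)) (hφ t h)
    have f2 := (hc_conv.theta.theta.hasTheta h1).comp (φ := fun t => 4 * t * (1 - t)) (hφ t h)
    exact (((hs.mul hs).mul f2).sub (((tau_theta h).mul ((HasTheta.const 1 t).add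
      (tau_theta h))).mul f1)).congr_val (by ring)
  · refine ContinuousAt.mul (by fun_prop) (ContinuousAt.sub ?_ ?_)
    · exact ContinuousAt.div (by fun_prop) (by fun_prop) (by norm_num)
    · exact ContinuousAt.div (by fun_prop) (by fun_prop) (by norm_num)
  · refine ContinuousAt.sub ?_ ?_
    · exact ContinuousAt.div (by fun_prop) (by fun_prop) (by norm_num)
    · exact ContinuousAt.div (by fun_prop) (by fun_prop) (by norm_num)
  · exact ContinuousAt.div (by fun_prop) (by fun_prop) (by norm_num)
  · -- `θ³F` comes from applying `θ` to `θ²F = τ (θF + 3/16 F)`.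
    filter_upwards [a2.eventually_nhds, n1.eventually_nhds] with t h h'
    have ht := h.self_of_nhds
    have ht' := h'.self_of_nhds
    have e2 : ∀ᶠ s in 𝓝 t, PS (thetaCoeff (thetaCoeff fc)) s =
        s / (1 - s) * (PS (thetaCoeff fc) s + 3/16 * PS fc s) := by
      filter_upwards [h, h'] with s hs hs'
      have := fc_ode hs
      field_simp
      linarith
    obtain ⟨d, hd, hd'⟩ := (tau_theta ht').mul ((fc_conv.theta.hasTheta ht).add
      ((HasTheta.const (3/16) t).mul (fc_conv.hasTheta ht)))
    obtain ⟨e, he, he'⟩ := fc_conv.theta.theta.hasTheta ht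
    have e3 := he.unique (hd.congr_of_eventuallyEq e2)
    rw [e3, hd'] at he'
    rw [← he', e2.self_of_nhds]
    field_simp
    ring
  · filter_upwards [a1, n1] with t h1 h
    have := hc_ode h1
    -- The multiplier is the ratio of the coefficients of the third derivative
    -- in the goal and in the hypothesis.
    linear_combination (norm := skip) (1 - 2 * t) / (1 - t) ^ 3 * this
    field_simp
    ring

/-! ### The identities on the whole range -/

/-- The parameter `u` as a function of `r`. -/
noncomputable def U (r : ℝ) : ℝ := 9 * r / ((1 - r) * (8 + r))

/-- The upper limit `w` as a function of `r`. -/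
noncomputable def W (r : ℝ) : ℝ := r * (8 + r) ^ 3 / (8 + 20 * r - r ^ 2) ^ 2

lemma X1_lt {u : ℝ} (h0 : 0 ≤ u) (h1 : u ≤ 1) : |X1 u| < 1 := by
  unfold X1
  rw [abs_of_nonneg (by positivity), div_lt_one (by positivity)]
  have : u ^ 3 ≤ 1 := pow_le_one₀ h0 h1
  have : (3:ℝ) ^ 4 ≤ (3 + u) ^ 4 := by gcongr; linarith
  linarith

lemma Z_lt {u : ℝ} (h0 : 0 ≤ u) (h1 : u < 1) : |Z u| < 1 / 36 := by
  unfold Z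
  rw [abs_of_nonneg (by positivity), div_lt_div_iff₀ (by positivity) (by positivity)]
  nlinarith [mul_pos (sub_pos.mpr h1) (sub_pos.mpr h1)]

lemma green_eq {u : ℝ} (h0 : 0 ≤ u) (h1 : u < 1) :
    (1 - 1 * u / (1 + 1 * u)) * PS sc (Z u) = (1 - 1 * u / (3 + 1 * u)) * PS hc (X1 u) := by
  refine AnalyticOnNhd.eqOn_of_preconnected_of_eventuallyEq (U := Set.Ico 0 1) (𝕜 := ℝ) ?_ ?_
    isPreconnected_Ico ⟨le_refl 0, one_pos⟩ Z_eq_X1 ⟨h0, h1⟩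
  · rintro v ⟨hv0, hv1⟩
    have : 1 + 1 * v ≠ 0 := by positivity
    exact (q_analytic this).mul (AnalyticAt.fun_comp (sc_conv.analyticAt (Z_lt hv0 hv1))
      (Z_analytic (by simpa using this)))
  · rintro v ⟨hv0, hv1⟩
    have : 3 + 1 * v ≠ 0 := by positivity
    exact (q_analytic this).mul (AnalyticAt.fun_comp (hc_conv.analyticAt (X1_lt hv0 hv1.le))
      (X1_analytic (by simpa using this)))

lemma r_lt {r : ℝ} (h : r ^ 2 + 16 * r ≤ 8) : r ≤ 1 / 2 := by
  nlinarith [sq_nonneg r]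

lemma U_bounds {r : ℝ} (h0 : 0 ≤ r) (h : r ^ 2 + 16 * r ≤ 8) : 0 ≤ U r ∧ U r ≤ 1 := by
  have := r_lt h
  have h1 : 0 < 1 - r := by linarith
  refine ⟨by unfold U; positivity, ?_⟩
  unfold U
  rw [div_le_one (by positivity)]
  nlinarith

lemma U_lt {r : ℝ} (h0 : 0 ≤ r) (h : r ^ 2 + 16 * r < 8) : U r < 1 := by
  have := r_lt h.le
  have h1 : 0 < 1 - r := by linarith
  unfold U
  rw [div_lt_one (by positivity)]
  nlinarith

lemma W_den {r : ℝ} (h0 : 0 ≤ r) (h1 : r ≤ 1 / 2) : 0 < 8 + 20 * r - r ^ 2 := by nlinarith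

lemma one_sub_W {r : ℝ} (h : 8 + 20 * r - r ^ 2 ≠ 0) :
    1 - W r = 64 * (1 - r) ^ 3 / (8 + 20 * r - r ^ 2) ^ 2 := by
  unfold W
  generalize hE : 8 + 20 * r - r ^ 2 = E at h ⊢
  field_simp
  rw [← hE]
  ring

lemma W_bounds {r : ℝ} (h0 : 0 ≤ r) (h1 : r ≤ 1 / 2) : 0 ≤ W r ∧ W r < 1 := by
  have hd := W_den h0 h1
  refine ⟨by unfold W; positivity, ?_⟩
  have := one_sub_W hd.ne'
  have h3 : 0 < 1 - r := by linarith
  have : 0 < 1 - W r := by rw [this]; positivity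
  linarith

lemma W_abs {r : ℝ} (h0 : 0 ≤ r) (h1 : r ≤ 1 / 2) : |W r| < 1 := by
  obtain ⟨a, b⟩ := W_bounds h0 h1
  rwa [abs_of_nonneg a]

lemma U_analytic {r : ℝ} (h1 : 1 - r ≠ 0) (h2 : 8 + r ≠ 0) : AnalyticAt ℝ U r := by
  unfold U
  exact AnalyticAt.div (by fun_prop) (by fun_prop) (mul_ne_zero h1 h2)

lemma W_analytic {r : ℝ} (h : 8 + 20 * r - r ^ 2 ≠ 0) : AnalyticAt ℝ W r := by
  unfold W
  exact AnalyticAt.div (by fun_prop) (by fun_prop) (pow_ne_zero 2 h)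

lemma one_add_U {r : ℝ} (h1 : 1 - r ≠ 0) (h2 : 8 + r ≠ 0) :
    1 + 3 * U r = (8 + 20 * r - r ^ 2) / ((1 - r) * (8 + r)) := by
  unfold U
  field_simp
  ring

lemma X2_U {r : ℝ} (h1 : 1 - r ≠ 0) (h2 : 8 + r ≠ 0) (h : 8 + 20 * r - r ^ 2 ≠ 0) :
    4 * W r * (1 - W r) = X2 (U r) := by
  rw [one_sub_W h, X2, one_add_U h1 h2, W, U]
  generalize 8 + 20 * r - r ^ 2 = E at h ⊢
  field_simp
  ring

/-- `₂F₁(w)² / (1 + 3u) = H(X1 u) / (1 + u/3)` on the whole range of `r`. Clausen's formula holds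
only for `w < 1/2`; beyond that the identity is continued analytically in `r`. -/
lemma F_eq {r : ℝ} (h0 : 0 ≤ r) (h : r ^ 2 + 16 * r < 8) :
    (1 - 3 * U r / (1 + 3 * U r)) * (PS fc (W r) * PS fc (W r)) =
      (1 - 1 * U r / (3 + 1 * U r)) * PS hc (X1 (U r)) := by
  have hsub : ∀ s ∈ Set.Icc 0 r, 0 ≤ s ∧ s ^ 2 + 16 * s ≤ 8 ∧ s ≤ 1 / 2 := fun s hs => by
    have : s ^ 2 + 16 * s ≤ 8 := by nlinarith [hs.1, hs.2]
    exact ⟨hs.1, this, r_lt this⟩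
  refine AnalyticOnNhd.eqOn_of_preconnected_of_eventuallyEq (U := Set.Icc 0 r) (𝕜 := ℝ)
    (f := fun r => (1 - 3 * U r / (1 + 3 * U r)) * (PS fc (W r) * PS fc (W r)))
    (g := fun r => (1 - 1 * U r / (3 + 1 * U r)) * PS hc (X1 (U r))) ?_ ?_
    isPreconnected_Icc ⟨le_refl 0, h0⟩ ?_ ⟨h0, le_refl r⟩
  · intro s hs
    obtain ⟨hs0, hs1, hs2⟩ := hsub s hs
    have hU := U_bounds hs0 hs1
    have e1 : 1 + 3 * U s ≠ 0 := by linarith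
    have hUa : AnalyticAt ℝ U s := U_analytic (by linarith) (by linarith)
    have e2 : AnalyticAt ℝ (fun r => PS fc (W r)) s := AnalyticAt.fun_comp
      (fc_conv.analyticAt (W_abs hs0 hs2)) (W_analytic (W_den hs0 hs2).ne')
    exact (AnalyticAt.fun_comp (q_analytic e1) hUa).mul (e2.mul e2)
  · intro s hs
    obtain ⟨hs0, hs1, hs2⟩ := hsub s hs
    have hU := U_bounds hs0 hs1
    have e1 : 3 + 1 * U s ≠ 0 := by linarith
    have hUa : AnalyticAt ℝ U s := U_analytic (by linarith) (by linarith)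
    have e3 : AnalyticAt ℝ (fun v => PS hc (X1 v)) (U s) := AnalyticAt.fun_comp
      (hc_conv.analyticAt (X1_lt hU.1 hU.2)) (X1_analytic (by linarith))
    have e4 : AnalyticAt ℝ (fun r => PS hc (X1 (U r))) s :=
      AnalyticAt.fun_comp (g := fun v => PS hc (X1 v)) e3 hUa
    exact (AnalyticAt.fun_comp (q_analytic e1) hUa).mul e4
  · have tU : Tendsto U (𝓝 0) (𝓝 0) := by
      have := (U_analytic (r := 0) (by norm_num) (by norm_num)).continuousAt.tendsto
      simpa [U] using this
    have tW : Tendsto W (𝓝 0) (𝓝 0) := by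
      have := (W_analytic (r := 0) (by norm_num)).continuousAt.tendsto
      simpa [W] using this
    have n1 : ∀ᶠ s in 𝓝 (0:ℝ), 1 - s ≠ 0 :=
      (ContinuousAt.eventually_ne (g := fun s : ℝ => 1 - s) (by fun_prop) (by norm_num))
    have n2 : ∀ᶠ s in 𝓝 (0:ℝ), 8 + s ≠ 0 :=
      (ContinuousAt.eventually_ne (g := fun s : ℝ => 8 + s) (by fun_prop) (by norm_num))
    have n3 : ∀ᶠ s in 𝓝 (0:ℝ), 8 + 20 * s - s ^ 2 ≠ 0 :=
      (ContinuousAt.eventually_ne (g := fun s : ℝ => 8 + 20 * s - s ^ 2) (by fun_prop) (by norm_num))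
    filter_upwards [tU.eventually X2_eq_X1, tW.eventually clausen, n1, n2, n3]
      with s hX hC h1 h2 h3
    rw [hC, X2_U h1 h2 h3, hX]

/-! ### Antiderivatives -/

/-- Coefficients of the antiderivative `∑ aₙ xⁿ / n` of `(f - a₀) / x`. The term `n = 0` vanishes
since division by zero gives zero. -/
noncomputable def intCoeff (a : ℕ → ℝ) : ℕ → ℝ := fun n => a n / n

lemma ConvOn.int {a : ℕ → ℝ} {ρ : ℝ} (h : ConvOn a ρ) : ConvOn (intCoeff a) ρ := by
  intro x hx
  refine Summable.of_norm_bounded (h x hx).norm fun n => ?_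
  simp only [intCoeff, norm_mul, norm_div]
  gcongr
  rcases n with _ | n
  · simp
  · apply div_le_self (norm_nonneg _)
    simp only [Real.norm_natCast]
    push_cast
    linarith [(Nat.cast_nonneg n : (0:ℝ) ≤ n)]

lemma ConvOn.int_hasTheta {a : ℕ → ℝ} {ρ x : ℝ} (h : ConvOn a ρ) (hx : |x| < ρ) :
    HasTheta (PS (intCoeff a)) (PS a x - a 0) x := by
  refine (h.int.hasTheta hx).congr_val ?_
  rw [(h.int.theta.shift hx).1, (h.shift hx).1]
  have : ∀ n : ℕ, thetaCoeff (intCoeff a) (n + 1) = a (n + 1) := fun n => by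
    simp only [thetaCoeff, intCoeff]
    have : ((n + 1 : ℕ) : ℝ) ≠ 0 := by positivity
    field_simp
  simp only [this]
  simp [thetaCoeff]

lemma poch_two (n : ℕ) : poch 2 n = (n + 1).factorial := by
  have := poch_succ' 1 n
  norm_num at this
  rw [← this, poch_one]

/-- The `₅F₄` series is, up to a factor, the antiderivative of `(H - 1) / x`. -/
lemma F54_eq {x : ℝ} (hx : |x| < 1) : PS (intCoeff hc) x = 3 / 32 * x * F54 x := by
  rw [(hc_conv.int.shift hx).1, F54, mul_right_comm, mul_comm _ x, ← tsum_mul_left,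
    ← tsum_mul_left, ← tsum_mul_left]
  simp only [intCoeff, Nat.cast_zero, div_zero, zero_add]
  refine tsum_congr fun n => ?_
  simp only [hc, poch_succ', poch_two, poch_one, Nat.factorial_succ]
  have : (n.factorial : ℝ) ≠ 0 := by positivity
  norm_num
  left
  field_simp
  ring

/-- The integrand of the `t`-integral, extended continuously to `t = 0`. -/
noncomputable def jInt (t : ℝ) : ℝ := dslope (fun t => F21 t ^ 2) 0 t * ((1 - 2 * t) / (1 - t))

/-- The `t`-integral, with the continuously extended integrand. -/
noncomputable def J (w : ℝ) : ℝ := ∫ t in (0:ℝ)..w, jInt t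

lemma F21_sq_analytic {t : ℝ} (h : |t| < 1) : AnalyticAt ℝ (fun t => F21 t ^ 2) t := by
  rw [F21_eq]
  exact (fc_conv.analyticAt h).pow 2

lemma jInt_continuousOn : ContinuousOn jInt (Set.Ioo (-1) 1) := by
  have hd : ContinuousOn (dslope (fun t => F21 t ^ 2) 0) (Set.Ioo (-1) 1) := by
    rw [continuousOn_dslope (Ioo_mem_nhds (by norm_num) (by norm_num))]
    exact ⟨fun t ht => (F21_sq_analytic (abs_lt.mpr ht)).continuousAt.continuousWithinAt,
      (F21_sq_analytic (by norm_num)).differentiableAt⟩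
  refine hd.mul (ContinuousOn.div (by fun_prop) (by fun_prop) fun t ht => ?_)
  linarith [ht.2]

lemma J_hasTheta {w : ℝ} (hw : |w| < 1) :
    HasTheta J ((F21 w ^ 2 - 1) * ((1 - 2 * w) / (1 - w))) w := by
  have hmem : w ∈ Set.Ioo (-1:ℝ) 1 := abs_lt.mp hw
  have hsub : Set.uIcc 0 w ⊆ Set.Ioo (-1:ℝ) 1 :=
    Set.ordConnected_Ioo.uIcc_subset ⟨by norm_num, by norm_num⟩ hmem
  refine ⟨jInt w, intervalIntegral.integral_hasDerivAt_right
    (jInt_continuousOn.mono hsub).intervalIntegrable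
    (jInt_continuousOn.stronglyMeasurableAtFilter isOpen_Ioo w hmem)
    (jInt_continuousOn.continuousAt (isOpen_Ioo.mem_nhds hmem)), ?_⟩
  have := sub_smul_dslope (fun t => F21 t ^ 2) 0 w
  have h0 : F21 0 = 1 := by rw [F21_eq, PS_zero, fc_zero]
  simp only [sub_zero, smul_eq_mul, h0, one_pow] at this
  rw [jInt, ← this]
  ring

lemma J_eq {w : ℝ} (h0 : 0 ≤ w) :
    J w = ∫ t in (0:ℝ)..w, ((F21 t) ^ 2 - 1) * (1 - 2 * t) / (t * (1 - t)) := by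
  refine intervalIntegral.integral_congr_ae (Filter.Eventually.of_forall fun t ht => ?_)
  rw [Set.uIoc_of_le h0] at ht
  have ht0 : t ≠ 0 := ht.1.ne'
  have h0 : F21 0 = 1 := by rw [F21_eq, PS_zero, fc_zero]
  rw [jInt, dslope_of_ne _ ht0, slope_def_field, h0, one_pow, sub_zero, div_mul_div_comm]

/-- The logarithmic term, split into elementary logarithms. -/
noncomputable def L (u : ℝ) : ℝ :=
  Real.log 27 + 5 * Real.log (1 + u) - 3 * Real.log (3 + u) - Real.log (1 + 3 * u)

lemma L_eq {u : ℝ} (h : 0 ≤ u) :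
    Real.log (27 * (1 + u) ^ 5 / ((3 + u) ^ 3 * (1 + 3 * u))) = L u := by
  rw [Real.log_div (by positivity) (by positivity), Real.log_mul (by positivity) (by positivity),
    Real.log_mul (by positivity) (by positivity), Real.log_pow, Real.log_pow, L]
  push_cast
  ring

lemma L_zero : L 0 = 0 := by
  have : Real.log 27 = 3 * Real.log 3 := by
    rw [show (27:ℝ) = 3 ^ 3 by norm_num, Real.log_pow]; norm_num
  simp [L, this]

lemma L_hasTheta {u : ℝ} (h : 0 ≤ u) :
    HasTheta L (5 * (u / (1 + u)) - 3 * (u / (3 + u)) - 3 * u / (1 + 3 * u)) u := by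
  have e1 : HasDerivAt (fun u : ℝ => Real.log (1 + u)) _ u :=
    ((hasDerivAt_id u).const_add 1).log (by simp; linarith)
  have e2 : HasDerivAt (fun u : ℝ => Real.log (3 + u)) _ u :=
    ((hasDerivAt_id u).const_add 3).log (by simp; linarith)
  have e3 : HasDerivAt (fun u : ℝ => Real.log (1 + 3 * u)) _ u :=
    (((hasDerivAt_id u).const_mul 3).const_add 1).log (by simp; linarith)
  refine ⟨_, (((e1.const_mul 5).const_add (Real.log 27)).sub (e2.const_mul 3)).sub e3, ?_⟩
  simp only [id]
  ring

/-! ### Integration in `r` -/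

lemma U_hasTheta {r : ℝ} (h1 : 1 - r ≠ 0) (h2 : 8 + r ≠ 0) :
    HasTheta U ((8 + r ^ 2) / ((1 - r) * (8 + r)) * U r) r := by
  refine ⟨_, ((hasDerivAt_id r).const_mul 9).div
    (((hasDerivAt_id r).const_sub 1).mul ((hasDerivAt_id r).const_add 8)) (mul_ne_zero h1 h2), ?_⟩
  simp only [id, U]
  field_simp
  ring

lemma W_hasTheta {r : ℝ} (h1 : 8 + 20 * r - r ^ 2 ≠ 0) (h2 : 8 + r ≠ 0) :
    HasTheta W ((1 + 3 * r / (8 + r) - 2 * r * (20 - 2 * r) / (8 + 20 * r - r ^ 2)) * W r) r := by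
  have e1 : HasDerivAt (fun r : ℝ => r * (8 + r) ^ 3) _ r :=
    (hasDerivAt_id r).mul (((hasDerivAt_id r).const_add 8).pow 3)
  have e2 : HasDerivAt (fun r : ℝ => (8 + 20 * r - r ^ 2) ^ 2) _ r :=
    ((((hasDerivAt_id r).const_mul 20).const_add 8).sub (hasDerivAt_pow 2 r)).pow 2
  refine ⟨_, e1.div e2 (pow_ne_zero 2 h1), ?_⟩
  simp only [id, W, Pi.sub_apply]
  generalize hE : 8 + 20 * r - r ^ 2 = E at h1 ⊢
  norm_num
  field_simp

/-- The logarithmic derivatives of `4w(1-w) = X2 u` in `r`. -/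
lemma W_U_rel {r : ℝ} (h0 : 0 ≤ r) (hr : r ≤ 1 / 2) :
    (1 + 3 * r / (8 + r) - 2 * r * (20 - 2 * r) / (8 + 20 * r - r ^ 2)) *
      ((1 - 2 * W r) / (1 - W r)) =
    (8 + r ^ 2) / ((1 - r) * (8 + r)) * (1 - 4 * (3 * U r / (1 + 3 * U r))) := by
  have hE := (W_den h0 hr).ne'
  have h1 : 1 - r ≠ 0 := by linarith
  have h2 : 8 + r ≠ 0 := by linarith
  rw [one_sub_W hE, one_add_U h1 h2, W, U]
  generalize hE' : 8 + 20 * r - r ^ 2 = E at hE ⊢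
  field_simp
  rw [← hE']
  ring

/-- The right-hand side of the identity as a function of `r`. -/
noncomputable def rhs (r : ℝ) : ℝ :=
  2/5 * L (U r) + 3/10 * PS (intCoeff hc) (X1 (U r)) + 1/10 * J (W r)

lemma U_zero : U 0 = 0 := by simp [U]
lemma W_zero : W 0 = 0 := by simp [W]

lemma rhs_continuousAt {r : ℝ} (h0 : 0 ≤ r) (h : r ^ 2 + 16 * r ≤ 8) : ContinuousAt rhs r := by
  have hr := r_lt h
  have hU := U_bounds h0 h
  have cU : ContinuousAt U r := (U_analytic (by linarith) (by linarith)).continuousAt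
  have cW : ContinuousAt W r := (W_analytic (W_den h0 hr).ne').continuousAt
  obtain ⟨_, dL, _⟩ := L_hasTheta hU.1
  obtain ⟨_, dJ, _⟩ := J_hasTheta (W_abs h0 hr)
  have cX : ContinuousAt X1 (U r) := (X1_analytic (by linarith)).continuousAt
  have cG := (hc_conv.int.analyticAt (X1_lt hU.1 hU.2)).continuousAt
  have c1 : ContinuousAt (fun r => L (U r)) r := ContinuousAt.comp' dL.continuousAt cU
  have c2 : ContinuousAt (fun r => PS (intCoeff hc) (X1 (U r))) r :=
    ContinuousAt.comp' (f := fun r => X1 (U r)) cG (ContinuousAt.comp' cX cU)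
  have c3 : ContinuousAt (fun r => J (W r)) r := ContinuousAt.comp' dJ.continuousAt cW
  exact ((continuousAt_const.mul c1).add (continuousAt_const.mul c2)).add (continuousAt_const.mul c3)

/-- Both sides of the identity have the same `θ`-derivative in `r`. -/
lemma diff_hasTheta {r : ℝ} (h0 : 0 ≤ r) (h : r ^ 2 + 16 * r < 8) :
    HasTheta (fun r => PS (intCoeff sc) (Z (U r)) - rhs r) 0 r := by
  have hr := r_lt h.le
  obtain ⟨hU0, -⟩ := U_bounds h0 h.le
  have hU1 := U_lt h0 h
  have n1 : 1 + U r ≠ 0 := by linarith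
  have n2 : 3 + U r ≠ 0 := by linarith
  have n3 : 1 + 3 * U r ≠ 0 := by linarith
  have tU := U_hasTheta (r := r) (by linarith) (by linarith)
  have tW := W_hasTheta (W_den h0 hr).ne' (show 8 + r ≠ 0 by linarith)
  have tS := ((sc_conv.int_hasTheta (Z_lt hU0 hU1)).comp (Z_theta n1)).comp tU
  have tG := ((hc_conv.int_hasTheta (X1_lt hU0 hU1.le)).comp (X1_theta n2)).comp tU
  have tL := (L_hasTheta hU0).comp tU
  have tJ := (J_hasTheta (W_abs h0 hr)).comp tW
  refine (tS.sub ((((HasTheta.const (2/5) r).mul tL).add ((HasTheta.const (3/10) r).mul tG)).add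
    ((HasTheta.const (1/10) r).mul tJ))).congr_val ?_
  have hrel := W_U_rel h0 hr
  have hA := green_eq hU0 hU1
  have hF := F_eq h0 h
  rw [hc_zero, sc_zero, mul_left_comm _ (F21 (W r) ^ 2 - 1), hrel, F21_eq]
  simp only [one_mul] at hA hF ⊢
  have eA : PS sc (Z (U r)) = (1 + U r) * (3 / (3 + U r) * PS hc (X1 (U r))) := by
    field_simp at hA ⊢
    linear_combination hA
  have eF : PS fc (W r) ^ 2 = (1 + 3 * U r) * (3 / (3 + U r) * PS hc (X1 (U r))) := by
    generalize U r = u at *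
    generalize hE : 1 + 3 * u = E at *
    field_simp at hF ⊢
    linear_combination hF + (3 + u) * PS fc (W r) ^ 2 * hE
  rw [eA, eF]
  generalize (8 + r ^ 2) / ((1 - r) * (8 + r)) = σ
  generalize U r = u at *
  generalize hE : 1 + 3 * u = E at *
  field_simp
  rw [← hE]
  ring

lemma identity_lt {r : ℝ} (h0 : 0 ≤ r) (h : r ^ 2 + 16 * r < 8) :
    PS (intCoeff sc) (Z (U r)) = rhs r := by
  have hz : PS (intCoeff sc) (Z (U 0)) - rhs 0 = 0 := by
    simp [rhs, U_zero, W_zero, Z, X1, PS_zero, intCoeff, L_zero, J]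
  rcases h0.eq_or_lt with rfl | hpos
  · linarith
  have hsub : ∀ s, 0 ≤ s → s ≤ r → s ^ 2 + 16 * s < 8 := fun s hs hs' => by nlinarith
  obtain ⟨c, hc, hc'⟩ := exists_hasDerivAt_eq_slope
    (fun r => PS (intCoeff sc) (Z (U r)) - rhs r) (fun _ => 0) hpos
    (fun s hs => by
      obtain ⟨d, hd, _⟩ := diff_hasTheta hs.1 (hsub s hs.1 hs.2)
      exact hd.continuousAt.continuousWithinAt)
    (fun s hs => by
      obtain ⟨d, hd, hd'⟩ := diff_hasTheta hs.1.le (hsub s hs.1.le hs.2.le)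
      have : d = 0 := (mul_eq_zero.mp hd').resolve_left hs.1.ne'
      rwa [this] at hd)
  simp only [hz, sub_zero] at hc'
  rw [eq_comm, div_eq_zero_iff] at hc'
  rcases hc' with hc' | hc'
  · linarith
  · linarith

lemma intCoeff_sc_nonneg (n : ℕ) : 0 ≤ intCoeff sc n :=
  div_nonneg (sc_bound n).1 (Nat.cast_nonneg n)

lemma Z_nonneg {u : ℝ} (h : 0 ≤ u) : 0 ≤ Z u := by unfold Z; positivity

lemma Z_le {u : ℝ} (h : 0 ≤ u) : Z u ≤ 1 / 36 := by
  unfold Z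
  rw [div_le_div_iff₀ (by positivity) (by positivity)]
  nlinarith [sq_nonneg (1 - u)]

/-- The endpoint is reached by monotone convergence, the coefficients being non-negative. -/
lemma identity_le {r : ℝ} (h0 : 0 ≤ r) (h : r ^ 2 + 16 * r ≤ 8) :
    (Summable fun n => intCoeff sc n * Z (U r) ^ n) ∧ PS (intCoeff sc) (Z (U r)) = rhs r := by
  rcases h.lt_or_eq with hlt | heq
  · exact ⟨sc_conv.int _ (Z_lt (U_bounds h0 h).1 (U_lt h0 hlt)), identity_lt h0 hlt⟩
  have hpos : 0 < r := by
    rcases h0.eq_or_lt with rfl | h'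
    · norm_num at heq
    · exact h'
  have hr := r_lt h
  have hU1 : U r = 1 := by
    unfold U
    rw [div_eq_one_iff_eq (mul_ne_zero (by linarith) (by linarith))]
    linarith
  have hev : ∀ᶠ s in 𝓝[<] r, 0 ≤ s ∧ s ^ 2 + 16 * s < 8 := by
    filter_upwards [Ioo_mem_nhdsLT hpos] with s hs
    exact ⟨hs.1.le, by nlinarith [hs.1, hs.2]⟩
  have cZ : ContinuousAt (fun s => Z (U s)) r :=
    ContinuousAt.comp' (Z_analytic (by rw [hU1]; norm_num)).continuousAt
      (U_analytic (by linarith) (by linarith)).continuousAt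
  have tZ : Tendsto (fun s => Z (U s)) (𝓝[<] r) (𝓝 (Z (U r))) :=
    cZ.tendsto.mono_left nhdsWithin_le_nhds
  have tR : Tendsto rhs (𝓝[<] r) (𝓝 (rhs r)) :=
    (rhs_continuousAt h0 h).tendsto.mono_left nhdsWithin_le_nhds
  have hZ0 : 0 ≤ Z (U r) := Z_nonneg (by rw [hU1]; norm_num)
  have hZr : Z (U r) = 1 / 36 := by rw [hU1, Z]; norm_num
  have hnn : ∀ n, 0 ≤ intCoeff sc n * Z (U r) ^ n := fun n =>
    mul_nonneg (intCoeff_sc_nonneg n) (pow_nonneg hZ0 n)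
  have hpart : ∀ s : Finset ℕ, ∑ n ∈ s, intCoeff sc n * Z (U r) ^ n ≤ rhs r := by
    intro s
    refine le_of_tendsto_of_tendsto
      (tendsto_finsetSum s fun n _ => (tZ.pow n).const_mul (intCoeff sc n)) tR ?_
    filter_upwards [hev] with t ht
    have hU := U_bounds ht.1 ht.2.le
    rw [← identity_lt ht.1 ht.2]
    exact (sc_conv.int _ (Z_lt hU.1 (U_lt ht.1 ht.2))).sum_le_tsum s fun n _ =>
      mul_nonneg (intCoeff_sc_nonneg n) (pow_nonneg (Z_nonneg hU.1) n)
  have hs : Summable fun n => intCoeff sc n * Z (U r) ^ n := summable_of_sum_le hnn hpart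
  refine ⟨hs, le_antisymm (hs.tsum_le_of_sum_le hpart) ?_⟩
  refine le_of_tendsto tR ?_
  filter_upwards [hev] with t ht
  have hU := U_bounds ht.1 ht.2.le
  rw [← identity_lt ht.1 ht.2]
  refine (sc_conv.int _ (Z_lt hU.1 (U_lt ht.1 ht.2))).tsum_le_tsum (fun n => ?_) hs
  refine mul_le_mul_of_nonneg_left ?_ (intCoeff_sc_nonneg n)
  rw [hZr]
  exact pow_le_pow_left₀ (Z_nonneg hU.1) (Z_le hU.1) n

/-- The intermediate identity (5.23) for the simple cubic spanning tree
generating function, valid for `r ∈ [0, 6√2 − 8]`. -/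
theorem sc_numerical_identity (r : ℝ) (hr0 : 0 ≤ r) (hr1 : r ≤ 6 * Real.sqrt 2 - 8) :
    let u : ℝ := 9 * r / ((1 - r) * (8 + r))
    let w : ℝ := r * (8 + r) ^ 3 / (8 + 20 * r - r ^ 2) ^ 2
    (∑' n : ℕ, (1 / ((n : ℝ) + 1)) * (u / (9 * (1 + u) ^ 2)) ^ (n + 1) *
        ((2 * (n + 1)).choose (n + 1) : ℝ) *
        ∑ k ∈ Finset.range (n + 2), ((2 * k).choose k : ℝ) * (((n + 1).choose k : ℝ)) ^ 2) =
      (2/5) * Real.log (27 * (1 + u) ^ 5 / ((3 + u) ^ 3 * (1 + 3 * u))) +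
      (4 * u ^ 3 / (5 * (3 + u) ^ 4)) * F54 (256 * u ^ 3 / (9 * (3 + u) ^ 4)) +
      (1/10) * ∫ t in (0:ℝ)..w, ((F21 t) ^ 2 - 1) * (1 - 2 * t) / (t * (1 - t)) := by
  have hq : r ^ 2 + 16 * r ≤ 8 := by
    nlinarith [Real.sq_sqrt (show (0:ℝ) ≤ 2 by norm_num), Real.sqrt_nonneg 2]
  intro u w
  have hU := U_bounds hr0 hq
  have hW := W_bounds hr0 (r_lt hq)
  obtain ⟨hs, hid⟩ := identity_le hr0 hq
  change 0 ≤ u ∧ u ≤ 1 at hU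
  change 0 ≤ w ∧ w < 1 at hW
  change Summable fun n => intCoeff sc n * Z u ^ n at hs
  change PS (intCoeff sc) (Z u) = 2/5 * L u + 3/10 * PS (intCoeff hc) (X1 u) + 1/10 * J w at hid
  rw [L_eq hU.1, ← J_eq hW.1]
  have hX : 4 * u ^ 3 / (5 * (3 + u) ^ 4) * F54 (256 * u ^ 3 / (9 * (3 + u) ^ 4)) =
      3/10 * PS (intCoeff hc) (X1 u) := by
    rw [F54_eq (X1_lt hU.1 hU.2)]
    have : 3 + u ≠ 0 := by linarith
    simp only [X1]
    field_simp
    ring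
  rw [hX, ← hid, PS, hs.tsum_eq_zero_add]
  simp only [intCoeff, Nat.cast_zero, div_zero, zero_mul, zero_add]
  congr 1; ext n
  simp only [sc, hex, Z]
  push_cast
  ring
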